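/- There is no C² formula φ(x) with one free variable over the signature with binary relation symbol E and unary predicate symbols P₁, P₂, P₃ such that for every finite undirected labelled graph H of dimension 3 and every node v of H: H ⊨ φ(v) if and only if H is isomorphic to gad(G) for some strict linear order G. -/

import Mathlib

/-- The two variables of the logic `C²`. -/
inductive C2Var : Type
  | x : C2Var
  | y : C2Var
deriving DecidableEq

/-- Formulas of `C²`, the two-variable fragment of first-order logic with counting, over
the signature with one binary relation symbol `E` and unary predicates `P₁,…,P_d`.
`exN k v φ` is the counting quantifier `∃_k v. φ` ("at least `k` elements"). -/
inductive C2 (d : ℕ) : Type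
  | eq : C2Var → C2Var → C2 d
  | edge : C2Var → C2Var → C2 d
  | pred : Fin d → C2Var → C2 d
  | not : C2 d → C2 d
  | and : C2 d → C2 d → C2 d
  | or : C2 d → C2 d → C2 d
  | exN : ℕ → C2Var → C2 d → C2 d

/-- Satisfaction of a `C²` formula in a finite directed labelled graph `(V, E, lab)`
under an assignment `a` of the two variables. -/
def C2.sat {d : ℕ} {V : Type} [Fintype V] (E : V → V → Prop) (lab : V → Fin d → Bool) :
    C2 d → (C2Var → V) → Prop
  | .eq s t, a => a s = a t
  | .edge s t, a => E (a s) (a t)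
  | .pred i s, a => lab (a s) i = true
  | .not φ, a => ¬ C2.sat E lab φ a
  | .and φ ψ, a => C2.sat E lab φ a ∧ C2.sat E lab ψ a
  | .or φ ψ, a => C2.sat E lab φ a ∨ C2.sat E lab ψ a
  | .exN k w φ, a => k ≤ Nat.card {u : V | C2.sat E lab φ (Function.update a w u)}

/-- Quantifier nesting depth of a `C²` formula. -/
def C2.depth {d : ℕ} : C2 d → ℕ
  | .eq _ _ => 0
  | .edge _ _ => 0
  | .pred _ _ => 0
  | .not φ => φ.depth
  | .and φ ψ => max φ.depth ψ.depth
  | .or φ ψ => max φ.depth ψ.depth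
  | .exN _ _ φ => φ.depth + 1

/-- Counting rank of a `C²` formula: the maximal `k` occurring in a counting
quantifier `∃_k`. -/
def C2.rank {d : ℕ} : C2 d → ℕ
  | .eq _ _ => 0
  | .edge _ _ => 0
  | .pred _ _ => 0
  | .not φ => φ.rank
  | .and φ ψ => max φ.rank ψ.rank
  | .or φ ψ => max φ.rank ψ.rank
  | .exN k _ φ => max k φ.rank

/-- Free variables of a `C²` formula. -/
def C2.freeVars {d : ℕ} : C2 d → Finset C2Var
  | .eq s t => {s, t}
  | .edge s t => {s, t}
  | .pred _ s => {s}
  | .not φ => φ.freeVars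
  | .and φ ψ => φ.freeVars ∪ ψ.freeVars
  | .or φ ψ => φ.freeVars ∪ ψ.freeVars
  | .exN _ w φ => φ.freeVars.erase w

/-- A strict linear order on a type `V`: an irreflexive, transitive and total
binary relation. -/
def IsStrictLinearOrderRel {V : Type} (E : V → V → Prop) : Prop :=
  (∀ v, ¬ E v v) ∧ (∀ u v w, E u v → E v w → E u w) ∧ (∀ u v : V, u ≠ v → E u v ∨ E v u)

/-- Vertices of the gadgetisation of a directed graph `(V, E)`: a node `v¹_u` for every
`u : V` (left summand) and, for every edge `e` of `E`, a node `v²_e` (right summand with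
second component `false`) and a node `v³_e` (second component `true`). -/
def GadV {V : Type} (E : V → V → Prop) : Type :=
  V ⊕ ({p : V × V // E p.1 p.2} × Bool)

/-- The (symmetric) adjacency relation of the gadgetisation: every edge `(u,w)` of the
original graph is replaced by the undirected path `v¹_u — v²_{(u,w)} — v³_{(u,w)} — v¹_w`. -/
def gadAdj {V : Type} (E : V → V → Prop) : GadV E → GadV E → Prop
  | Sum.inl u, Sum.inr (e, b) => (b = false ∧ e.val.1 = u) ∨ (b = true ∧ e.val.2 = u)
  | Sum.inr (e, b), Sum.inl u => (b = false ∧ e.val.1 = u) ∨ (b = true ∧ e.val.2 = u)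
  | Sum.inr (e, b), Sum.inr (e', b') => e = e' ∧ b ≠ b'
  | Sum.inl _, Sum.inl _ => False

/-- The labelling of the gadgetisation: `v¹`-nodes get label `(1,0,0)`, `v²`-nodes get
`(0,1,0)` and `v³`-nodes get `(0,0,1)`. -/
def gadLab {V : Type} (E : V → V → Prop) : GadV E → Fin 3 → Bool
  | Sum.inl _ => fun i => decide (i = 0)
  | Sum.inr (_, false) => fun i => decide (i = 1)
  | Sum.inr (_, true) => fun i => decide (i = 2)

noncomputable instance GadV.fintype {V : Type} [Fintype V] (E : V → V → Prop) :
    Fintype (GadV E) := by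
  classical
  unfold GadV
  infer_instance

/-- An isomorphism of labelled graphs: an edge-preserving and label-preserving bijection. -/
def IsoLabGraph {V₁ V₂ : Type} {d : ℕ} (E₁ : V₁ → V₁ → Prop) (lab₁ : V₁ → Fin d → Bool)
    (E₂ : V₂ → V₂ → Prop) (lab₂ : V₂ → Fin d → Bool) : Prop :=
  ∃ f : V₁ ≃ V₂, (∀ u v, E₁ u v ↔ E₂ (f u) (f v)) ∧ ∀ v, lab₁ v = lab₂ (f v)

/-- `(W, EH, labH)` is isomorphic to the gadgetisation of some (finite) strict linear
order. -/
def IsGadLin {W : Type} (EH : W → W → Prop) (labH : W → Fin 3 → Bool) : Prop :=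
  ∃ (U : Type) (_ : Fintype U) (R : U → U → Prop),
    IsStrictLinearOrderRel R ∧ IsoLabGraph EH labH (gadAdj R) (gadLab R)

/-- A gadgetised path from `u` to `z` via `w` (a `P₂` node) and `v` (a `P₃` node). -/
def GadPath {V : Type} (E : V → V → Prop) (lab : V → Fin 3 → Bool) (u w v z : V) : Prop :=
  lab u 0 = true ∧ lab w 1 = true ∧ lab v 2 = true ∧ lab z 0 = true ∧
    E u w ∧ E w v ∧ E v z

/-- There is a gadgetised edge from `u` to `z`. -/
def GadEdge {V : Type} (E : V → V → Prop) (lab : V → Fin 3 → Bool) (u z : V) : Prop :=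
  ∃ w v, GadPath E lab u w v z

/-- Condition φ₁: every node satisfies exactly one of `P₁, P₂, P₃`. -/
def phi1 {V : Type} (lab : V → Fin 3 → Bool) : Prop :=
  ∀ v : V,
    (lab v 0 = true ∧ lab v 1 = false ∧ lab v 2 = false) ∨
    (lab v 0 = false ∧ lab v 1 = true ∧ lab v 2 = false) ∨
    (lab v 0 = false ∧ lab v 1 = false ∧ lab v 2 = true)

/-- Condition φ₂: every `P₂`-node has exactly two neighbours, exactly one of them a
`P₁`-node and exactly one a `P₃`-node; every `P₃`-node has exactly two neighbours, exactly
one a `P₁`-node and exactly one a `P₂`-node; and no two `P₁`-nodes are adjacent. -/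
def phi2 {V : Type} [Fintype V] (E : V → V → Prop) (lab : V → Fin 3 → Bool) : Prop :=
  (∀ v : V, lab v 1 = true →
    Nat.card {w | E v w} = 2 ∧ Nat.card {w | E v w ∧ lab w 0 = true} = 1 ∧
      Nat.card {w | E v w ∧ lab w 2 = true} = 1) ∧
  (∀ v : V, lab v 2 = true →
    Nat.card {w | E v w} = 2 ∧ Nat.card {w | E v w ∧ lab w 0 = true} = 1 ∧
      Nat.card {w | E v w ∧ lab w 1 = true} = 1) ∧
  (∀ u v : V, lab u 0 = true → lab v 0 = true → ¬ E u v)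

/-- Condition φ₃: between any two distinct `P₁`-nodes there is exactly one gadgetised edge
in total (from `u` to `z` or from `z` to `u`). -/
def phi3 {V : Type} [Fintype V] (E : V → V → Prop) (lab : V → Fin 3 → Bool) : Prop :=
  ∀ u z : V, lab u 0 = true → lab z 0 = true → u ≠ z →
    Nat.card {p : V × V | GadPath E lab u p.1 p.2 z} +
      Nat.card {p : V × V | GadPath E lab z p.1 p.2 u} = 1

/-- Condition φ₄: there is no triangle of gadgetised edges. -/
def phi4 {V : Type} (E : V → V → Prop) (lab : V → Fin 3 → Bool) : Prop :=
  ¬ ∃ u v w : V, GadEdge E lab u v ∧ GadEdge E lab v w ∧ GadEdge E lab w u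

/-- `N₂ u`: the number of neighbours of `u` satisfying `P₂`. -/
noncomputable def N2 {V : Type} [Fintype V] (E : V → V → Prop) (lab : V → Fin 3 → Bool)
    (u : V) : ℕ :=
  Nat.card {w | E u w ∧ lab w 1 = true}

/-- Condition ψ: for all `0 ≤ i < j < |P₁|` there are `P₁`-nodes `u, w` with `N₂ u = j`,
`N₂ w = i` and a gadgetised edge from `u` to `w`. -/
def psiCond {V : Type} [Fintype V] (E : V → V → Prop) (lab : V → Fin 3 → Bool) : Prop :=
  ∀ i j : ℕ, i < j → j < Nat.card {v : V | lab v 0 = true} →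
    ∃ u w : V, lab u 0 = true ∧ lab w 0 = true ∧
      N2 E lab u = j ∧ N2 E lab w = i ∧ GadEdge E lab u w

abbrev WD (n : ℕ) : Type := {p : Fin n × Fin n // p.1 < p.2}

abbrev WV (n : ℕ) : Type := Fin n ⊕ (WD n × Bool)

def wAdj {n : ℕ} (τ : Equiv.Perm (WD n)) : WV n → WV n → Prop
  | Sum.inl u, Sum.inr (e, b) => (b = false ∧ e.val.1 = u) ∨ (b = true ∧ (τ e).val.2 = u)
  | Sum.inr (e, b), Sum.inl u => (b = false ∧ e.val.1 = u) ∨ (b = true ∧ (τ e).val.2 = u)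
  | Sum.inr (e, b), Sum.inr (e', b') => e = e' ∧ b ≠ b'
  | Sum.inl _, Sum.inl _ => False

def wLab {n : ℕ} : WV n → Fin 3 → Bool
  | Sum.inl _ => fun i => decide (i = 0)
  | Sum.inr (_, false) => fun i => decide (i = 1)
  | Sum.inr (_, true) => fun i => decide (i = 2)

def wMid {n : ℕ} (c : ℕ) (a : Fin n) : Prop := c ≤ a.val ∧ a.val + c < n

def wS {n : ℕ} (c : ℕ) (a b : Fin n) : Prop := a = b ∨ (wMid c a ∧ wMid c b)

def wT {n : ℕ} (c : ℕ) : WV n → WV n → Prop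
  | Sum.inl a, Sum.inl b => wS c a b
  | Sum.inr (d, b), Sum.inr (d', b') => b = b' ∧ wS c d.val.1 d'.val.1 ∧ wS c d.val.2 d'.val.2
  | _, _ => False

theorem wMid_mono {n c c' : ℕ} (h : c ≤ c') {a : Fin n} (ha : wMid c' a) : wMid c a := by
  unfold wMid at *; omega

theorem wS_mono {n c c' : ℕ} (h : c ≤ c') {a b : Fin n} (ha : wS c' a b) : wS c a b := by
  rcases ha with h1 | ⟨h1, h2⟩
  · exact Or.inl h1
  · exact Or.inr ⟨wMid_mono h h1, wMid_mono h h2⟩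

theorem wS_refl {n c : ℕ} (a : Fin n) : wS c a a := Or.inl rfl

theorem wS_symm {n c : ℕ} {a b : Fin n} (h : wS c a b) : wS c b a := by
  rcases h with h1 | ⟨h1, h2⟩
  · exact Or.inl h1.symm
  · exact Or.inr ⟨h2, h1⟩

theorem wS_trans {n c : ℕ} {a b d : Fin n} (h : wS c a b) (h' : wS c b d) : wS c a d := by
  rcases h with rfl | ⟨h1, h2⟩
  · exact h'
  · rcases h' with rfl | ⟨h3, h4⟩
    · exact Or.inr ⟨h1, h2⟩
    · exact Or.inr ⟨h1, h4⟩

theorem wS_swap {n c : ℕ} {a b : Fin n} (h : wS c a b) (x : Fin n) :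
    wS c x (Equiv.swap a b x) := by
  rw [Equiv.swap_apply_def]
  split_ifs with h1 h2
  · subst h1; exact h
  · subst h2; exact wS_symm h
  · exact wS_refl x

theorem wT_mono {n c c' : ℕ} (h : c ≤ c') {u v : WV n} (ha : wT c' u v) : wT c u v := by
  rcases u with a | ⟨d, b⟩ <;> rcases v with a' | ⟨d', b'⟩
  · exact wS_mono h ha
  · exact ha
  · exact ha
  · exact ⟨ha.1, wS_mono h ha.2.1, wS_mono h ha.2.2⟩

theorem wT_refl {n c : ℕ} (u : WV n) : wT c u u := by
  rcases u with a | ⟨d, b⟩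
  · exact wS_refl a
  · exact ⟨rfl, wS_refl _, wS_refl _⟩

theorem wT_symm {n c : ℕ} {u v : WV n} (ha : wT c u v) : wT c v u := by
  rcases u with a | ⟨d, b⟩ <;> rcases v with a' | ⟨d', b'⟩
  · exact wS_symm ha
  · exact ha
  · exact ha
  · exact ⟨ha.1.symm, wS_symm ha.2.1, wS_symm ha.2.2⟩

theorem wT_trans {n c : ℕ} {u v w : WV n} (h : wT c u v) (h' : wT c v w) : wT c u w := by
  rcases u with a | ⟨d, b⟩ <;> rcases v with a' | ⟨d', b'⟩ <;> rcases w with a'' | ⟨d'', b''⟩ <;>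
    first
    | exact wS_trans h h'
    | exact h.elim
    | exact h'.elim
    | exact ⟨h.1.trans h'.1, wS_trans h.2.1 h'.2.1, wS_trans h.2.2 h'.2.2⟩

theorem wT_lab {n c : ℕ} {u v : WV n} (h : wT c u v) : wLab u = wLab v := by
  rcases u with a | ⟨d, b⟩ <;> rcases v with a' | ⟨d', b'⟩
  · rfl
  · exact h.elim
  · exact h.elim
  · obtain ⟨rfl, -⟩ := h
    cases b <;> rfl

/-- matching of `v` relative to `u` with `v'` relative to `u'` -/
def wM {n : ℕ} (c : ℕ) (E E' : WV n → WV n → Prop) (u v u' v' : WV n) : Prop :=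
  wT c v v' ∧ (u = v ↔ u' = v') ∧ (E u v ↔ E' u' v')

def wSim {n : ℕ} (k c : ℕ) (E E' : WV n → WV n → Prop) (u u' : WV n) : Prop :=
  ∃ f : WV n → WV n, Function.Injective f ∧
    ∀ v, wM c E E' u v u' (f v) ∨
      ∃ g : Fin k → WV n, Function.Injective g ∧ ∀ t, wM c E E' u v u' (g t)

def wEx {n : ℕ} (c : ℕ) (E E' : WV n → WV n → Prop) (u : WV n) : Prop :=
  ∃ f : WV n → WV n, Function.Injective f ∧ ∀ v, wM c E E' u v u (f v)

theorem wM_trans {n c : ℕ} {E E' E'' : WV n → WV n → Prop} {u v u' v' u'' v'' : WV n}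
    (h : wM c E E' u v u' v') (h' : wM c E' E'' u' v' u'' v'') : wM c E E'' u v u'' v'' :=
  ⟨wT_trans h.1 h'.1, h.2.1.trans h'.2.1, h.2.2.trans h'.2.2⟩

theorem wSim_ex {n k c : ℕ} {E E' E'' : WV n → WV n → Prop} {u u' : WV n}
    (h : wSim k c E E' u u') (h' : wEx c E' E'' u') : wSim k c E E'' u u' := by
  obtain ⟨f, hf, H⟩ := h
  obtain ⟨p, hp, H'⟩ := h'
  refine ⟨p ∘ f, hp.comp hf, fun v => ?_⟩
  rcases H v with h1 | ⟨g, hg, h1⟩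
  · exact Or.inl (wM_trans h1 (H' _))
  · exact Or.inr ⟨p ∘ g, hp.comp hg, fun t => wM_trans (h1 t) (H' _)⟩

theorem ex_wSim {n k c : ℕ} {E E' E'' : WV n → WV n → Prop} {u u' : WV n}
    (h : wEx c E E' u) (h' : wSim k c E' E'' u u') : wSim k c E E'' u u' := by
  obtain ⟨p, hp, H'⟩ := h
  obtain ⟨f, hf, H⟩ := h'
  refine ⟨f ∘ p, hf.comp hp, fun v => ?_⟩
  rcases H (p v) with h1 | ⟨g, hg, h1⟩
  · exact Or.inl (wM_trans (H' _) h1)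
  · exact Or.inr ⟨g, hg, fun t => wM_trans (H' _) (h1 t)⟩

theorem wSim_card {n k c j : ℕ} (hj : j ≤ k) {E E' : WV n → WV n → Prop} {u u' : WV n}
    (h : wSim k c E E' u u') (Q Q' : WV n → Prop)
    (hQ : ∀ v v', wM c E E' u v u' v' → Q v → Q' v')
    (hc : j ≤ Nat.card {v | Q v}) : j ≤ Nat.card {v | Q' v} := by
  obtain ⟨f, hf, H⟩ := h
  by_cases hb : ∃ v, Q v ∧ ∃ g : Fin k → WV n, Function.Injective g ∧ ∀ t, wM c E E' u v u' (g t)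
  · obtain ⟨v, hv, g, hg, h1⟩ := hb
    refine hj.trans ?_
    have := Nat.card_le_card_of_injective (fun t : Fin k => (⟨g t, hQ _ _ (h1 t) hv⟩ : {v | Q' v}))
      (fun a b hab => hg (by simpa using hab))
    rwa [Nat.card_fin] at this
  · refine hc.trans ?_
    refine Nat.card_le_card_of_injective (fun v : {v | Q v} => (⟨f v.1, ?_⟩ : {v | Q' v}))
      (fun a b hab => Subtype.ext (hf (by simpa using hab)))
    rcases H v.1 with h1 | h1
    · exact hQ _ _ h1 v.2
    · exact (hb ⟨v.1, v.2, h1⟩).elim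

theorem wAdj_symm {n : ℕ} (τ : Equiv.Perm (WD n)) (u v : WV n) (h : wAdj τ u v) : wAdj τ v u := by
  rcases u with a | ⟨d, b⟩ <;> rcases v with a' | ⟨d', b'⟩
  · exact h
  · exact h
  · exact h
  · exact ⟨h.1.symm, h.2.symm⟩

theorem wAdj_irrefl {n : ℕ} (τ : Equiv.Perm (WD n)) (u : WV n) : ¬ wAdj τ u u := by
  rcases u with a | ⟨d, b⟩
  · exact fun h => h
  · exact fun h => h.2 rfl

/-- Pair swaps give simulations between nodes of kind 2 or 3. -/
theorem wSim_pair {n k c : ℕ} (d d' : WD n) (b : Bool) (h1 : wS c d.val.1 d'.val.1)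
    (h2 : wS c d.val.2 d'.val.2) :
    wSim k c (wAdj 1) (wAdj 1) (Sum.inr (d, b)) (Sum.inr (d', b)) := by
  classical
  let σ : Equiv.Perm (Fin n) :=
    if b = false then Equiv.swap d.val.1 d'.val.1 else Equiv.swap d.val.2 d'.val.2
  let ρ : Equiv.Perm (WD n) := Equiv.swap d d'
  have hσ : ∀ x, wS c x (σ x) := by
    intro x
    dsimp only [σ]
    split_ifs
    · exact wS_swap h1 x
    · exact wS_swap h2 x
  refine ⟨Sum.map σ (Prod.map ρ id), ?_, fun v => Or.inl ⟨?_, ?_, ?_⟩⟩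
  · exact Function.Injective.sumMap σ.injective (ρ.injective.prodMap Function.injective_id)
  · rcases v with a | ⟨e, b'⟩
    · exact hσ a
    · refine ⟨rfl, ?_⟩
      show wS c e.val.1 (Equiv.swap d d' e).val.1 ∧ wS c e.val.2 (Equiv.swap d d' e).val.2
      rw [Equiv.swap_apply_def]
      split_ifs with q1 q2
      · subst q1; exact ⟨h1, h2⟩
      · subst q2; exact ⟨wS_symm h1, wS_symm h2⟩
      · exact ⟨wS_refl _, wS_refl _⟩
  · rcases v with a | ⟨e, b'⟩
    · simp
    · have : d = e ↔ d' = ρ e := by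
        rw [← ρ.injective.eq_iff]; simp [ρ]
      simp [this]
  · rcases v with a | ⟨e, b'⟩
    · cases b
      · have : d.val.1 = a ↔ d'.val.1 = σ a := by
          rw [← σ.injective.eq_iff]; simp [σ]
        simp [wAdj, this]
      · have : d.val.2 = a ↔ d'.val.2 = σ a := by
          rw [← σ.injective.eq_iff]; simp [σ]
        simp [wAdj, this]
    · have : d = e ↔ d' = ρ e := by
        rw [← ρ.injective.eq_iff]; simp [ρ]
      simp [wAdj, this]

theorem wSim_refl {n k c : ℕ} (E : WV n → WV n → Prop) (u : WV n) : wSim k c E E u u :=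
  ⟨id, Function.injective_id, fun v => Or.inl ⟨wT_refl v, Iff.rfl, Iff.rfl⟩⟩

theorem wSwap_lt {n c : ℕ} {i i' : Fin n} (hi : wMid c i) (hi' : wMid c i') {a b : Fin n}
    (hab : a < b) (hn : ¬ (wMid c a ∧ wMid c b)) : Equiv.swap i i' a < Equiv.swap i i' b := by
  rw [Equiv.swap_apply_def, Equiv.swap_apply_def]
  unfold wMid at *
  simp only [Fin.ext_iff, Fin.lt_def] at *
  split_ifs <;> omega

theorem wMid_swap {n c : ℕ} {i i' : Fin n} (hi : wMid c i) (hi' : wMid c i') (a : Fin n) :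
    wMid c (Equiv.swap i i' a) ↔ wMid c a := by
  rw [Equiv.swap_apply_def]
  split_ifs with h1 h2
  · subst h1; simp [hi, hi']
  · subst h2; simp [hi, hi']
  · rfl

open Classical in
noncomputable def wPairMap {n : ℕ} (c : ℕ) (i i' : Fin n) (hi : wMid c i) (hi' : wMid c i')
    (d : WD n) : WD n :=
  if h : wMid c d.val.1 ∧ wMid c d.val.2 then d
  else ⟨(Equiv.swap i i' d.val.1, Equiv.swap i i' d.val.2), wSwap_lt hi hi' d.2 h⟩

theorem wPairMap_inj {n c : ℕ} {i i' : Fin n} (hi : wMid c i) (hi' : wMid c i') :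
    Function.Injective (wPairMap c i i' hi hi') := by
  intro d e h
  unfold wPairMap at h
  split_ifs at h with h1 h2 h2
  · exact h
  · exfalso; rw [h] at h1; simp only [wMid_swap hi hi'] at h1; exact h2 h1
  · exfalso; rw [← h] at h2; simp only [wMid_swap hi hi'] at h2; exact h1 h2
  · have := congrArg Subtype.val h
    simp only [Prod.mk.injEq, EmbeddingLike.apply_eq_iff_eq] at this
    exact Subtype.ext (Prod.ext this.1 this.2)

theorem wSim_node {n k c : ℕ} (i i' : Fin n) (hi : wMid (c + k + 1) i)
    (hi' : wMid (c + k + 1) i') :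
    wSim k c (wAdj 1) (wAdj 1) (Sum.inl i) (Sum.inl i') := by
  classical
  have mi : wMid c i := wMid_mono (by omega) hi
  have mi' : wMid c i' := wMid_mono (by omega) hi'
  have hs : wS c i i' := Or.inr ⟨mi, mi'⟩
  refine ⟨Sum.map (Equiv.swap i i') (Prod.map (wPairMap c i i' mi mi') id), ?_, ?_⟩
  · exact Function.Injective.sumMap (Equiv.injective _)
      ((wPairMap_inj mi mi').prodMap Function.injective_id)
  have e1 : ∀ a, i = a ↔ i' = Equiv.swap i i' a := by
    intro a
    rw [← (Equiv.swap i i').injective.eq_iff]; simp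
  rintro (a | ⟨d, b⟩)
  · refine Or.inl ⟨wS_swap hs a, ?_, ?_⟩
    · simpa using e1 a
    · simp [wAdj]
  by_cases hm : wMid c d.val.1 ∧ wMid c d.val.2
  · right
    have hi2 := hi'
    unfold wMid at hi2
    by_cases hadj : wAdj 1 (Sum.inl i) (Sum.inr (d, b))
    · cases b
      · refine ⟨fun t => Sum.inr (⟨(i', ⟨i' + 1 + t, by omega⟩), by
          simp [Fin.lt_def]; omega⟩, false), ?_, fun t => ⟨⟨rfl, ?_, ?_⟩, by simp, ?_⟩⟩
        · intro t t' h
          simp at h; exact Fin.ext h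
        · exact Or.inr ⟨hm.1, mi'⟩
        · refine Or.inr ⟨hm.2, ?_⟩
          unfold wMid; dsimp only; omega
        · simp only [hadj, true_iff]; simp [wAdj]
      · refine ⟨fun t => Sum.inr (⟨(⟨c + t, by omega⟩, i'), by
          simp [Fin.lt_def]; omega⟩, true), ?_, fun t => ⟨⟨rfl, ?_, ?_⟩, by simp, ?_⟩⟩
        · intro t t' h
          simp at h; exact Fin.ext h
        · refine Or.inr ⟨hm.1, ?_⟩
          unfold wMid; dsimp only; omega
        · exact Or.inr ⟨hm.2, mi'⟩
        · simp only [hadj, true_iff]; simp [wAdj]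
    · refine ⟨fun t => Sum.inr (⟨(⟨c, by omega⟩, ⟨c + 1 + t, by omega⟩), by
          simp [Fin.lt_def]; omega⟩, b), ?_, fun t => ⟨⟨rfl, ?_, ?_⟩, by simp, ?_⟩⟩
      · intro t t' h
        simp at h; exact Fin.ext h
      · refine Or.inr ⟨hm.1, ?_⟩
        unfold wMid; dsimp only; omega
      · refine Or.inr ⟨hm.2, ?_⟩
        unfold wMid; dsimp only; omega
      · simp only [hadj, false_iff]
        have := t.2
        simp only [wAdj, Equiv.Perm.coe_one, id, Fin.ext_iff]
        omega
  · left
    have hpm : wPairMap c i i' mi mi' d =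
      ⟨(Equiv.swap i i' d.val.1, Equiv.swap i i' d.val.2), wSwap_lt mi mi' d.2 hm⟩ := by
      unfold wPairMap; rw [dif_neg hm]
    refine ⟨⟨rfl, ?_, ?_⟩, by simp, ?_⟩
    · show wS c _ (wPairMap c i i' mi mi' d).val.1
      rw [hpm]; exact wS_swap hs _
    · show wS c _ (wPairMap c i i' mi mi' d).val.2
      rw [hpm]; exact wS_swap hs _
    · have a1 := e1 d.val.1
      have a2 := e1 d.val.2
      simp only [Sum.map_inl, Sum.map_inr, Prod.map_apply, wAdj, hpm, id, Equiv.Perm.coe_one,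
        eq_comm (b := i), eq_comm (b := i'), a1, a2]

theorem wSim_one {n k c : ℕ} (u u' : WV n) (h : wT (c + k + 1) u u') :
    wSim k c (wAdj 1) (wAdj 1) u u' := by
  rcases u with a | ⟨d, b⟩ <;> rcases u' with a' | ⟨d', b'⟩
  · rcases h with rfl | ⟨h1, h2⟩
    · exact wSim_refl _ _
    · exact wSim_node _ _ h1 h2
  · exact h.elim
  · exact h.elim
  · obtain ⟨rfl, h1, h2⟩ := h
    exact wSim_pair _ _ _ (wS_mono (by omega) h1) (wS_mono (by omega) h2)

/-- exact equivalence of the two graphs at each node; `τ` an involution preserving types -/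
theorem wEx_main {n c : ℕ} (τ : Equiv.Perm (WD n)) (hτ : ∀ d, τ (τ d) = d)
    (h1 : ∀ d, wS c d.val.1 (τ d).val.1) (h2 : ∀ d, wS c d.val.2 (τ d).val.2) (u : WV n) :
    wEx c (wAdj 1) (wAdj τ) u ∧ wEx c (wAdj τ) (wAdj 1) u := by
  classical
  rcases u with a | ⟨d, b⟩
  · let p : WV n → WV n := fun v => match v with
      | Sum.inl b => Sum.inl b
      | Sum.inr (d, false) => Sum.inr (d, false)
      | Sum.inr (d, true) => Sum.inr (τ d, true)
    have hp : Function.Injective p := by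
      rintro (x | ⟨x, _ | _⟩) (y | ⟨y, _ | _⟩) h <;> simpa [p] using h
    refine ⟨⟨p, hp, ?_⟩, ⟨p, hp, ?_⟩⟩
    · rintro (x | ⟨x, _ | _⟩)
      · exact ⟨wT_refl _, by simp [p], by simp [p, wAdj]⟩
      · exact ⟨wT_refl _, by simp [p], by simp [p, wAdj]⟩
      · exact ⟨⟨rfl, h1 x, h2 x⟩, by simp [p], by simp [p, wAdj, hτ]⟩
    · rintro (x | ⟨x, _ | _⟩)
      · exact ⟨wT_refl _, by simp [p], by simp [p, wAdj]⟩
      · exact ⟨wT_refl _, by simp [p], by simp [p, wAdj]⟩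
      · exact ⟨⟨rfl, h1 x, h2 x⟩, by simp [p], by simp [p, wAdj]⟩
  · cases b
    · refine ⟨⟨id, Function.injective_id, ?_⟩, ⟨id, Function.injective_id, ?_⟩⟩ <;>
      · rintro (x | ⟨x, _ | _⟩) <;> exact ⟨wT_refl _, by simp, by simp [wAdj]⟩
    · let σ := Equiv.swap d.val.2 (τ d).val.2
      have hσ : ∀ x, wS c x (σ x) := wS_swap (h2 d)
      have hp : Function.Injective (Sum.map σ id : WV n → WV n) :=
        Function.Injective.sumMap σ.injective Function.injective_id
      have q1 : ∀ x, d.val.2 = x ↔ (τ d).val.2 = σ x := by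
        intro x; rw [← σ.injective.eq_iff]; simp [σ]
      have q2 : ∀ x, (τ d).val.2 = x ↔ d.val.2 = σ x := by
        intro x; rw [← σ.injective.eq_iff]; simp [σ]
      refine ⟨⟨Sum.map σ id, hp, ?_⟩, ⟨Sum.map σ id, hp, ?_⟩⟩
      · rintro (x | ⟨x, y⟩)
        · exact ⟨hσ x, by simp, by simp [wAdj, q1]⟩
        · exact ⟨wT_refl _, by simp, by simp [wAdj]⟩
      · rintro (x | ⟨x, y⟩)
        · exact ⟨hσ x, by simp, by simp [wAdj, q2]⟩
        · exact ⟨wT_refl _, by simp, by simp [wAdj]⟩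

def wComp {n : ℕ} (c : ℕ) (E E' : WV n → WV n → Prop) (a a' : C2Var → WV n) : Prop :=
  (∀ s, wT c (a s) (a' s)) ∧
    ∀ s t, (a s = a t ↔ a' s = a' t) ∧ (E (a s) (a t) ↔ E' (a' s) (a' t))

def wOther : C2Var → C2Var
  | .x => .y
  | .y => .x

theorem wComp_update {n c C : ℕ} (hc : c ≤ C) {E E' : WV n → WV n → Prop}
    (hE : ∀ u v, E u v → E v u) (hE' : ∀ u v, E' u v → E' v u)
    (hi : ∀ u, ¬ E u u) (hi' : ∀ u, ¬ E' u u)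
    {a a' : C2Var → WV n} (h : wComp C E E' a a') (w : C2Var) {v v' : WV n}
    (hM : wM c E E' (a (wOther w)) v (a' (wOther w)) v') :
    wComp c E E' (Function.update a w v) (Function.update a' w v') := by
  obtain ⟨m1, m2, m3⟩ := hM
  have m2' : (v = a (wOther w)) ↔ (v' = a' (wOther w)) := by
    rw [eq_comm, m2, eq_comm]
  have m3' : E v (a (wOther w)) ↔ E' v' (a' (wOther w)) :=
    ⟨fun q => hE' _ _ (m3.1 (hE _ _ q)), fun q => hE _ _ (m3.2 (hE' _ _ q))⟩
  have t1 := wT_mono hc (h.1 (wOther w))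
  have hw : ∀ s, s = w ∨ s = wOther w := by
    intro s; cases w <;> cases s <;> simp [wOther]
  have hne : wOther w ≠ w := by cases w <;> simp [wOther]
  have t2 := h.2 (wOther w) (wOther w)
  refine ⟨?_, ?_⟩
  · intro s
    rcases hw s with rfl | rfl
    · rw [Function.update_self, Function.update_self]; exact m1
    · rw [Function.update_of_ne hne, Function.update_of_ne hne]; exact t1
  · intro s t
    rcases hw s with rfl | rfl
    · rcases hw t with rfl | rfl
      · rw [Function.update_self, Function.update_self]
        exact ⟨by simp, iff_of_false (hi _) (hi' _)⟩
      · rw [Function.update_self, Function.update_self, Function.update_of_ne hne,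
          Function.update_of_ne hne]
        exact ⟨m2', m3'⟩
    · rcases hw t with rfl | rfl
      · rw [Function.update_self, Function.update_self, Function.update_of_ne hne,
          Function.update_of_ne hne]
        exact ⟨m2, m3⟩
      · rw [Function.update_of_ne hne, Function.update_of_ne hne]
        exact t2

theorem wSat {n k C : ℕ} {E E' : WV n → WV n → Prop}
    (hE : ∀ u v, E u v → E v u) (hE' : ∀ u v, E' u v → E' v u)
    (hi : ∀ u, ¬ E u u) (hi' : ∀ u, ¬ E' u u)
    (hs : ∀ c u u', c ≤ C → wT (c + k + 1) u u' → wSim k c E E' u u' ∧ wSim k c E' E u' u)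
    (φ : C2 3) : ∀ (m : ℕ) (a a' : C2Var → WV n), φ.rank ≤ k → φ.depth ≤ m → m * (k + 1) ≤ C →
      wComp (m * (k + 1)) E E' a a' → (C2.sat E wLab φ a ↔ C2.sat E' wLab φ a') := by
  induction φ with
  | eq s t => intro m a a' _ _ _ h; exact (h.2 s t).1
  | edge s t => intro m a a' _ _ _ h; exact (h.2 s t).2
  | pred i s => intro m a a' _ _ _ h; simp only [C2.sat, wT_lab (h.1 s)]
  | not φ ih => intro m a a' h1 h2 h3 h; exact not_congr (ih m a a' h1 h2 h3 h)
  | and φ ψ ih1 ih2 =>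
    intro m a a' h1 h2 h3 h
    simp only [C2.rank, C2.depth, max_le_iff] at h1 h2
    exact and_congr (ih1 m a a' h1.1 h2.1 h3 h) (ih2 m a a' h1.2 h2.2 h3 h)
  | or φ ψ ih1 ih2 =>
    intro m a a' h1 h2 h3 h
    simp only [C2.rank, C2.depth, max_le_iff] at h1 h2
    exact or_congr (ih1 m a a' h1.1 h2.1 h3 h) (ih2 m a a' h1.2 h2.2 h3 h)
  | exN j w φ ih =>
    intro m a a' h1 h2 h3 h
    simp only [C2.rank, C2.depth, max_le_iff] at h1 h2
    obtain ⟨m, rfl⟩ : ∃ m', m = m' + 1 := ⟨m - 1, by omega⟩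
    have hm : (m + 1) * (k + 1) = m * (k + 1) + k + 1 := by ring
    have hle : m * (k + 1) ≤ (m + 1) * (k + 1) := by omega
    obtain ⟨s1, s2⟩ := hs (m * (k + 1)) (a (wOther w)) (a' (wOther w)) (by omega)
      (hm ▸ h.1 (wOther w))
    have key : ∀ v v', wM (m * (k + 1)) E E' (a (wOther w)) v (a' (wOther w)) v' →
        (C2.sat E wLab φ (Function.update a w v) ↔ C2.sat E' wLab φ (Function.update a' w v')) :=
      fun v v' hM => ih m _ _ h1.2 (by omega) (by omega) (wComp_update hle hE hE' hi hi' h w hM)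
    simp only [C2.sat]
    constructor
    · exact wSim_card h1.1 s1 _ _ (fun v v' hM => (key v v' hM).1)
    · refine wSim_card h1.1 s2 _ _ (fun v v' hM => (key v' v ?_).2)
      exact ⟨wT_symm hM.1, hM.2.1.symm, hM.2.2.symm⟩

theorem wGad (n : ℕ) : IsGadLin (wAdj (1 : Equiv.Perm (WD n))) wLab := by
  refine ⟨Fin n, inferInstance, (· < ·), ⟨fun v => lt_irrefl v, fun u v w => lt_trans,
    fun u v h => lt_or_gt_of_ne h⟩, Equiv.refl _, ?_, ?_⟩
  · rintro (x | ⟨x, b⟩) (y | ⟨y, b'⟩) <;> exact Iff.rfl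
  · rintro (x | ⟨x, _ | _⟩) <;> rfl

theorem wNotGad {n : ℕ} (τ : Equiv.Perm (WD n)) (d e : WD n) (hne : d ≠ e)
    (h1 : d.val.1 = e.val.1) (h2 : (τ d).val.2 = (τ e).val.2) : ¬ IsGadLin (wAdj τ) wLab := by
  rintro ⟨U, _, R, -, f, hE, hL⟩
  have g1 : ∀ a, ∃ A, f (Sum.inl a) = Sum.inl A := by
    intro a
    have := congrFun (hL (Sum.inl a)) 0
    rcases hx : f (Sum.inl a) with x | ⟨x, _ | _⟩
    · exact ⟨x, rfl⟩
    all_goals rw [hx] at this; simp [wLab, gadLab] at this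
  have g2 : ∀ d, ∃ A, f (Sum.inr (d, false)) = Sum.inr (A, false) := by
    intro a
    have := congrFun (hL (Sum.inr (a, false))) 1
    rcases hx : f (Sum.inr (a, false)) with x | ⟨x, _ | _⟩
    · rw [hx] at this; simp [wLab, gadLab] at this
    · exact ⟨x, rfl⟩
    · rw [hx] at this; simp [wLab, gadLab] at this
  have g3 : ∀ d, ∃ A, f (Sum.inr (d, true)) = Sum.inr (A, true) := by
    intro a
    have := congrFun (hL (Sum.inr (a, true))) 2
    rcases hx : f (Sum.inr (a, true)) with x | ⟨x, _ | _⟩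
    · rw [hx] at this; simp [wLab, gadLab] at this
    · rw [hx] at this; simp [wLab, gadLab] at this
    · exact ⟨x, rfl⟩
  choose F1 hF1 using g1
  choose F2 hF2 using g2
  choose F3 hF3 using g3
  have k1 : ∀ d, F2 d = F3 d := by
    intro d
    have := (hE (Sum.inr (d, false)) (Sum.inr (d, true))).1 ⟨rfl, by simp⟩
    rw [hF2, hF3] at this
    exact this.1
  have k2 : ∀ d, (F2 d).val.1 = F1 d.val.1 := by
    intro d
    have := (hE (Sum.inr (d, false)) (Sum.inl d.val.1)).1 (Or.inl ⟨rfl, rfl⟩)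
    rw [hF2, hF1] at this
    simpa [gadAdj] using this
  have k3 : ∀ d, (F2 d).val.2 = F1 (τ d).val.2 := by
    intro d
    have := (hE (Sum.inr (d, true)) (Sum.inl (τ d).val.2)).1 (Or.inr ⟨rfl, rfl⟩)
    rw [hF3, hF1, ← k1] at this
    simpa [gadAdj] using this
  have : F2 d = F2 e := by
    apply Subtype.ext
    apply Prod.ext
    · rw [k2, k2, h1]
    · rw [k3, k3, h2]
  have hf : f (Sum.inr (d, false)) = f (Sum.inr (e, false)) := by rw [hF2, hF2, this]
  have := f.injective hf
  simp at this
  exact hne this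

/-- there is no `C²` formula `φ(x)` with one free variable (over the
signature with `E, P₁, P₂, P₃`) such that, over all finite undirected labelled graphs of
dimension 3, `φ` holds at a node iff the graph is isomorphic to the gadgetisation of a
strict linear order. -/
theorem stmt14 :
    ¬ ∃ φ : C2 3, φ.freeVars = {C2Var.x} ∧
      ∀ (V : Type) [Fintype V] (E : V → V → Prop),
        (∀ u v, E u v → E v u) → (∀ v, ¬ E v v) →
        ∀ (lab : V → Fin 3 → Bool) (v : V),
          (C2.sat E lab φ (fun _ => v) ↔ IsGadLin E lab) := by
  classical
  rintro ⟨φ, -, H⟩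
  obtain ⟨k, hk⟩ : ∃ k, φ.rank ≤ k := ⟨_, le_rfl⟩
  obtain ⟨m, hm⟩ : ∃ m, φ.depth ≤ m := ⟨_, le_rfl⟩
  obtain ⟨C, hC⟩ : ∃ C, m * (k + 1) = C := ⟨_, rfl⟩
  obtain ⟨n, hn⟩ : ∃ n, n = 2 * C + 4 := ⟨_, rfl⟩
  let a : Fin n := ⟨C, by omega⟩
  let b : Fin n := ⟨C + 1, by omega⟩
  let c : Fin n := ⟨C + 2, by omega⟩
  let d : Fin n := ⟨C + 3, by omega⟩
  let ab : WD n := ⟨(a, b), by simp [a, b, Fin.lt_def]⟩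
  let cd : WD n := ⟨(c, d), by simp [c, d, Fin.lt_def]⟩
  let ad : WD n := ⟨(a, d), by simp [a, d, Fin.lt_def]⟩
  have ma : wMid C a := by simp only [wMid, a]; omega
  have mb : wMid C b := by simp only [wMid, b]; omega
  have mc : wMid C c := by simp only [wMid, c]; omega
  have md : wMid C d := by simp only [wMid, d]; omega
  let τ : Equiv.Perm (WD n) := Equiv.swap ab cd
  have hτ : ∀ e, τ (τ e) = e := fun e => by simp [τ, ← Equiv.Perm.mul_apply]
  have hS : ∀ e, wS C e.val.1 (τ e).val.1 ∧ wS C e.val.2 (τ e).val.2 := by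
    intro e
    dsimp only [τ]
    rw [Equiv.swap_apply_def]
    split_ifs with q1 q2
    · subst q1; exact ⟨Or.inr ⟨ma, mc⟩, Or.inr ⟨mb, md⟩⟩
    · subst q2; exact ⟨Or.inr ⟨mc, ma⟩, Or.inr ⟨md, mb⟩⟩
    · exact ⟨wS_refl _, wS_refl _⟩
  have hex : ∀ c' u, c' ≤ C → wEx c' (wAdj 1) (wAdj τ) u ∧ wEx c' (wAdj τ) (wAdj 1) u :=
    fun c' u hc => wEx_main τ hτ (fun e => wS_mono hc (hS e).1) (fun e => wS_mono hc (hS e).2) u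
  have key := wSat (k := k) (C := C) (wAdj_symm 1) (wAdj_symm τ) (wAdj_irrefl 1) (wAdj_irrefl τ)
    (fun c' u u' hc hT => ⟨wSim_ex (wSim_one u u' hT) (hex c' u' hc).1,
      ex_wSim (hex c' u' hc).2 (wSim_one u' u (wT_symm hT))⟩)
    φ m (fun _ => Sum.inl a) (fun _ => Sum.inl a) hk hm hC.le
    ⟨fun s => wT_refl _, fun s t => ⟨Iff.rfl, by simp [wAdj]⟩⟩
  rw [H (WV n) (wAdj 1) (wAdj_symm 1) (wAdj_irrefl 1) wLab (Sum.inl a),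
    H (WV n) (wAdj τ) (wAdj_symm τ) (wAdj_irrefl τ) wLab (Sum.inl a)] at key
  refine wNotGad τ ab ad ?_ rfl ?_ (key.1 (wGad n))
  · simp [ab, ad, b, d]
  · have : τ ad = ad := Equiv.swap_apply_of_ne_of_ne (by simp [ab, ad, b, d]) (by simp [cd, ad, a, c])
    rw [this]
    simp [τ, ad, cd]
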